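/- There exists a constant K > 0, depending only on A, φ, μ and the chosen Haar family, such that every a ∈ H₀ satisfying ‖D(a·h) − a·D(h)‖_{L²(μ)} ≤ ‖h‖_{L²(μ)} for all h ∈ H₀ obeys ‖a − (∫_{Σ_A} a dμ)·1‖_∞ ≤ K, where 1 is the constant function one and ‖·‖_∞ is the supremum norm on Σ_A. -/

import Mathlib

open MeasureTheory Filter
open scoped ENNReal NNReal

namespace SFT

variable {l : ℕ}

/-- The one-sided subshift of finite type determined by the `l × l` matrix `A`:
infinite sequences with transitions allowed by `A`. -/
abbrev SigmaA (l : ℕ) (A : Matrix (Fin l) (Fin l) ℕ) : Type :=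
  {ω : ℕ → Fin l // ∀ k, A (ω k) (ω (k + 1)) = 1}

/-- The left shift `σ` on `SigmaA l A`. -/
def shift {A : Matrix (Fin l) (Fin l) ℕ} (ω : SigmaA l A) : SigmaA l A :=
  ⟨fun n => ω.1 (n + 1), fun k => ω.2 (k + 1)⟩

/-- Birkhoff sums `S_k φ = ∑_{m<k} φ ∘ σ^m`. -/
def birkhoff {A : Matrix (Fin l) (Fin l) ℕ} (φ : SigmaA l A → ℝ) (k : ℕ) (ω : SigmaA l A) : ℝ :=
  ∑ m ∈ Finset.range k, φ (shift^[m] ω)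

/-- The matrix `A` has `0`-`1` entries and is irreducible and aperiodic
(some power of `A` has all entries strictly positive). -/
def Primitive (A : Matrix (Fin l) (Fin l) ℕ) : Prop :=
  (∀ i j, A i j = 0 ∨ A i j = 1) ∧ ∃ n : ℕ, 0 < n ∧ ∀ i j, 0 < (A ^ n) i j

/-- A finite word is admissible, i.e. belongs to `Σ_A^*`. -/
def Admissible (A : Matrix (Fin l) (Fin l) ℕ) (x : List (Fin l)) : Prop :=
  x ≠ [] ∧ ∀ (i : ℕ) (h : i + 1 < x.length), A (x[i]'(by omega)) (x[i + 1]'h) = 1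

/-- The cylinder set `[x]` of a finite word (the empty word gives all of `Σ_A`). -/
def cylinder (A : Matrix (Fin l) (Fin l) ℕ) (x : List (Fin l)) : Set (SigmaA l A) :=
  {ω | ∀ (i : ℕ) (h : i < x.length), ω.1 i = x[i]'h}

/-- The initial word `(ω_1, …, ω_k)` of `ω`. -/
def wordPrefix {A : Matrix (Fin l) (Fin l) ℕ} (ω : SigmaA l A) (k : ℕ) : List (Fin l) :=
  List.ofFn (fun i : Fin k => ω.1 i)

/-- `μ` is a Gibbs measure for the potential `φ` with pressure `P`:
`c⁻¹ ≤ μ([ω_1,…,ω_k]) / exp(S_kφ(ω) − kP) ≤ c` for some `c > 1`. -/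
def IsGibbs {A : Matrix (Fin l) (Fin l) ℕ} (φ : SigmaA l A → ℝ) (P : ℝ)
    (μ : Measure (SigmaA l A)) : Prop :=
  ∃ c : ℝ, 1 < c ∧ ∀ (ω : SigmaA l A) (k : ℕ), 0 < k →
    c⁻¹ ≤ (μ (cylinder A (wordPrefix ω k))).toReal / Real.exp (birkhoff φ k ω - k * P) ∧
      (μ (cylinder A (wordPrefix ω k))).toReal / Real.exp (birkhoff φ k ω - k * P) ≤ c

/-- `φ` is Hölder continuous with respect to the metric `d(ω,υ) = 2^{-(ω ∧ υ)}`: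
there are `C` and an exponent `s > 0` with `|φ(ω) − φ(υ)| ≤ C ⬝ d(ω,υ)^s`, i.e.
`|φ(ω) − φ(υ)| ≤ C ⬝ 2^{-sn}` whenever `ω` and `υ` agree in their first `n` coordinates. -/
def HolderCont {A : Matrix (Fin l) (Fin l) ℕ} (φ : SigmaA l A → ℝ) : Prop :=
  ∃ C s : ℝ, 0 < s ∧ ∀ (ω υ : SigmaA l A) (n : ℕ),
    (∀ i < n, ω.1 i = υ.1 i) → |φ ω - φ υ| ≤ C * (2 : ℝ) ^ (-(s * n))

/-- `α(x)`: the number of children of the word `x` (the row sum of `A` at the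
last letter of `x`). -/
def alpha (A : Matrix (Fin l) (Fin l) ℕ) (x : List (Fin l)) : ℕ :=
  match x.getLast? with
  | some a => ∑ i, A a i
  | none => 0

/-- The `m`-th child `x θ_x⁻¹(m)` of the word `x`, the ordering of the children
being given by `θinv x`. -/
def child (θinv : List (Fin l) → ℕ → Fin l) (x : List (Fin l)) (m : ℕ) : List (Fin l) :=
  x ++ [θinv x m]

/-- The characteristic function of the cylinder `[x]`, as a function on `Σ_A`. -/
noncomputable def indC (A : Matrix (Fin l) (Fin l) ℕ) (x : List (Fin l)) : SigmaA l A → ℂ :=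
  (cylinder A x).indicator 1

/-- The `L²(μ)` inner product of two functions (conjugate linear in the first slot). -/
noncomputable def innerMu (A : Matrix (Fin l) (Fin l) ℕ) (μ : Measure (SigmaA l A))
    (f g : SigmaA l A → ℂ) : ℂ :=
  ∫ ω, (starRingEnd ℂ) (f ω) * g ω ∂μ

/-- The Haar function `e_{x,j} = ∑_m μ([xθ_x⁻¹(m)])^{-1/2} ⟨f_{x,m}, U_x f_{x,j}⟩_x χ_{[xθ_x⁻¹(m)]}`
as a function on `Σ_A`; here `u x m j = ⟨f_{x,m}, U_x f_{x,j}⟩_x` are the matrix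
coefficients of `U_x` in the orthonormal basis `(f_{x,m})_m`. -/
noncomputable def haarFun (A : Matrix (Fin l) (Fin l) ℕ) (μ : Measure (SigmaA l A))
    (θinv : List (Fin l) → ℕ → Fin l) (u : List (Fin l) → ℕ → ℕ → ℝ)
    (x : List (Fin l)) (j : ℕ) : SigmaA l A → ℂ := fun ω =>
  ∑ m ∈ Finset.range (alpha A x),
    ((((Real.sqrt ((μ (cylinder A (child θinv x m))).toReal))⁻¹ * u x m j : ℝ) : ℂ)) *
      indC A (child θinv x m) ω

/-- `H₀`: the complex linear span of the characteristic functions of cylinder sets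
of admissible words, together with `χ_{Σ_A}` (the cylinder of the empty word). -/
noncomputable def H0 (A : Matrix (Fin l) (Fin l) ℕ) : Submodule ℂ (SigmaA l A → ℂ) :=
  Submodule.span ℂ {f | ∃ x : List (Fin l), (x = [] ∨ Admissible A x) ∧ f = indC A x}

/-- The operator `D` (the Dirac operator on the dense domain `H₀`, extended to all
functions by the same formula; on `H₀` all but finitely many summands vanish). -/
noncomputable def Dop (A : Matrix (Fin l) (Fin l) ℕ) (μ : Measure (SigmaA l A))
    (θinv : List (Fin l) → ℕ → Fin l) (u : List (Fin l) → ℕ → ℕ → ℝ)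
    (h : SigmaA l A → ℂ) : SigmaA l A → ℂ := fun ω =>
  (∑ a : Fin l,
      (((μ (cylinder A [a])).toReal : ℂ))⁻¹ * innerMu A μ (indC A [a]) h * indC A [a] ω)
    - innerMu A μ (indC A []) h * indC A [] ω
    + ∑' y : List (Fin l),
        Set.indicator {y : List (Fin l) | Admissible A y}
          (fun y => ((((alpha A y : ℝ) - 1) / (μ (cylinder A y)).toReal : ℝ) : ℂ) *
            ∑ j ∈ Finset.range (alpha A y - 1),
              innerMu A μ (haarFun A μ θinv u y j) h * haarFun A μ θinv u y j ω) y

/-!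
Since `D 1 = 0`, testing the commutator on `h = 1` gives `‖D a‖₂ ≤ 1`. The Haar functions of
distinct words are orthogonal, so pairing `D a` with `e_{y,j}` gives
`(α(y) - 1) |⟨e_{y,j}, a⟩| ≤ μ[y] ‖D a‖₂`. The difference between the averages of `a` over a child
`[ym]` and over `[y]` is `μ[ym]^{-1/2} ∑_j u_{m,j} ⟨e_{y,j}, a⟩`, because the rows of the orthogonal
matrix `u` are orthonormal and its last column accounts for the average; hence it is at most
`μ[ym]^{-1/2} μ[y] ‖D a‖₂`, and it vanishes when `y` has only one child. When `y` has several
children, the Gibbs property bounds the measure of each of them below by a fixed multiple of `μ[y]`,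
so that this bound is at most a constant times `√μ[y] - √μ[ym]`. Summing along the cylinders
shrinking to a point `ω` therefore telescopes, and it controls `a(ω)` minus the average of `a` over
`[ω₁]`; the pairing of `D a` with `χ_[ω₁]` controls what remains.
-/

section Words

variable {A : Matrix (Fin l) (Fin l) ℕ}

lemma length_wordPrefix (ω : SigmaA l A) (k : ℕ) : (wordPrefix ω k).length = k :=
  List.length_ofFn

lemma mem_cylinder_iff {x : List (Fin l)} {ω : SigmaA l A} :
    ω ∈ cylinder A x ↔ wordPrefix ω x.length = x := by
  simp [cylinder, wordPrefix, List.ext_getElem_iff]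

lemma mem_cylinder_wordPrefix (ω : SigmaA l A) (k : ℕ) : ω ∈ cylinder A (wordPrefix ω k) := by
  rw [mem_cylinder_iff, length_wordPrefix]

lemma cylinder_nil : cylinder A [] = Set.univ := by
  ext ω
  simp [cylinder]

lemma wordPrefix_succ (ω : SigmaA l A) (k : ℕ) :
    wordPrefix ω (k + 1) = wordPrefix ω k ++ [ω.1 k] :=
  List.ofFn_succ_last

lemma take_wordPrefix (ω : SigmaA l A) {k n : ℕ} (h : k ≤ n) :
    (wordPrefix ω n).take k = wordPrefix ω k := by
  refine List.ext_getElem ?_ fun i _ _ => ?_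
  · simpa [length_wordPrefix] using h
  · simp [wordPrefix]

lemma wordPrefix_eq_of_le {ω υ : SigmaA l A} {k n : ℕ} (h : wordPrefix ω n = wordPrefix υ n)
    (hk : k ≤ n) : wordPrefix ω k = wordPrefix υ k := by
  rw [← take_wordPrefix ω hk, h, take_wordPrefix υ hk]

lemma mem_cylinder_append_singleton {x : List (Fin l)} {b : Fin l} {ω : SigmaA l A} :
    ω ∈ cylinder A (x ++ [b]) ↔ ω ∈ cylinder A x ∧ ω.1 x.length = b := by
  rw [mem_cylinder_iff, mem_cylinder_iff, List.length_append, List.length_singleton,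
    wordPrefix_succ, List.append_singleton_inj]

lemma mem_cylinder_singleton {b : Fin l} {ω : SigmaA l A} : ω ∈ cylinder A [b] ↔ ω.1 0 = b := by
  simp [cylinder]

lemma admissible_singleton (b : Fin l) : Admissible A [b] :=
  ⟨List.cons_ne_nil _ _, fun i hi => by simp at hi⟩

lemma admissible_wordPrefix (ω : SigmaA l A) {k : ℕ} (hk : 0 < k) :
    Admissible A (wordPrefix ω k) := by
  refine ⟨List.ne_nil_of_length_pos (by rwa [length_wordPrefix]), fun i hi => ?_⟩
  simpa [wordPrefix] using ω.2 i

lemma getLast_transition {x : List (Fin l)} (hx : x ≠ []) {ω : SigmaA l A}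
    (hω : ω ∈ cylinder A x) : A (x.getLast hx) (ω.1 x.length) = 1 := by
  have hlen : x.length - 1 + 1 = x.length := Nat.sub_add_cancel (List.length_pos_iff.2 hx)
  have h := ω.2 (x.length - 1)
  rwa [hω _ (by omega), ← List.getLast_eq_getElem hx, hlen] at h

lemma Admissible.append_singleton {x : List (Fin l)} (hx : Admissible A x) {b : Fin l}
    (hb : A (x.getLast hx.1) b = 1) : Admissible A (x ++ [b]) := by
  refine ⟨by simp, fun i hi => ?_⟩
  rw [List.length_append, List.length_singleton] at hi
  rcases (show i + 1 ≤ x.length by omega).lt_or_eq with h | h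
  · simpa [List.getElem_append_left h, List.getElem_append_left (show i < x.length by omega)]
      using hx.2 i h
  · have hlast : x.getLast hx.1 = x[i]'(by omega) := by
      simp [List.getLast_eq_getElem, ← h]
    simpa [List.getElem_append_left (show i < x.length by omega), h, hlast] using hb

lemma Primitive.exists_successor (hA : Primitive A) (i : Fin l) : ∃ j, A i j = 1 := by
  obtain ⟨h01, n, hn, hpos⟩ := hA
  by_contra! h
  have hrow : ∀ j, A i j = 0 := fun j => (h01 i j).resolve_right (h j)
  obtain ⟨k, rfl⟩ := Nat.exists_eq_succ_of_ne_zero hn.ne'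
  have := hpos i i
  simp [pow_succ', Matrix.mul_apply, hrow] at this

lemma Admissible.cylinder_nonempty {x : List (Fin l)} (hx : Admissible A x)
    (hA : ∀ i, ∃ j, A i j = 1) : (cylinder A x).Nonempty := by
  choose s hs using hA
  let ω : ℕ → Fin l := fun n =>
    if h : n < x.length then x[n] else s^[n + 1 - x.length] (x.getLast hx.1)
  refine ⟨⟨ω, fun k => ?_⟩, fun i hi => dif_pos hi⟩
  rcases lt_trichotomy (k + 1) x.length with h | h | h
  · simpa [ω, h, show k < x.length by omega] using hx.2 k h
  · have hlast : x.getLast hx.1 = x[k]'(by omega) := by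
      simp [List.getLast_eq_getElem, ← h]
    simpa [ω, ← h, hlast] using hs _
  · have hk : k + 1 + 1 - x.length = (k + 1 - x.length) + 1 := by omega
    simpa [ω, show ¬ k + 1 < x.length by omega, show ¬ k < x.length by omega, hk,
      Function.iterate_succ_apply'] using hs _

end Words

section Gibbs

variable {A : Matrix (Fin l) (Fin l) ℕ} {φ : SigmaA l A → ℝ} {P : ℝ} {μ : Measure (SigmaA l A)}

lemma coe_shift_iterate (k : ℕ) (ω : SigmaA l A) (n : ℕ) : (shift^[k] ω).1 n = ω.1 (n + k) := by
  induction k generalizing n with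
  | zero => rfl
  | succ k ih =>
    rw [Function.iterate_succ_apply', shift, ih, Nat.add_right_comm, Nat.add_assoc]

lemma birkhoff_add (φ : SigmaA l A → ℝ) (k t : ℕ) (ω : SigmaA l A) :
    birkhoff φ (k + t) ω = birkhoff φ k ω + birkhoff φ t (shift^[k] ω) :=
  birkhoffSum_add shift φ k t ω

lemma IsGibbs.measureReal_wordPrefix_pos (hG : IsGibbs φ P μ) (ω : SigmaA l A) {k : ℕ}
    (hk : 0 < k) : 0 < μ.real (cylinder A (wordPrefix ω k)) := by
  obtain ⟨c, hc, h⟩ := hG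
  exact (div_pos_iff_of_pos_right (Real.exp_pos _)).1
    ((inv_pos.2 (one_pos.trans hc)).trans_le (h ω k hk).1)

lemma IsGibbs.measureReal_cylinder_pos (hG : IsGibbs φ P μ) (hA : Primitive A) {x : List (Fin l)}
    (hx : Admissible A x) : 0 < μ.real (cylinder A x) := by
  obtain ⟨ω, hω⟩ := hx.cylinder_nonempty hA.exists_successor
  rw [← mem_cylinder_iff.1 hω]
  exact hG.measureReal_wordPrefix_pos ω (List.length_pos_iff.2 hx.1)

lemma IsGibbs.exists_quasi_bernoulli (hG : IsGibbs φ P μ) :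
    ∃ C : ℝ, 0 < C ∧ ∀ (ω : SigmaA l A) (k t : ℕ), 0 < k → 0 < t →
      C * (μ.real (cylinder A (wordPrefix ω k)) *
        μ.real (cylinder A (wordPrefix (shift^[k] ω) t))) ≤
          μ.real (cylinder A (wordPrefix ω (k + t))) := by
  obtain ⟨c, hc, hG⟩ := hG
  have : 0 < c := one_pos.trans hc
  have upper : ∀ ω k, 0 < k → μ.real (cylinder A (wordPrefix ω k)) ≤
      c * Real.exp (birkhoff φ k ω - k * P) := fun ω k hk =>
    (div_le_iff₀ (Real.exp_pos _)).1 (hG ω k hk).2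
  have lower : ∀ ω k, 0 < k → c⁻¹ * Real.exp (birkhoff φ k ω - k * P) ≤
      μ.real (cylinder A (wordPrefix ω k)) := fun ω k hk =>
    (le_div_iff₀ (Real.exp_pos _)).1 (hG ω k hk).1
  refine ⟨c⁻¹ ^ 3, by positivity, fun ω k t hk ht => ?_⟩
  calc c⁻¹ ^ 3 * (μ.real (cylinder A (wordPrefix ω k)) *
        μ.real (cylinder A (wordPrefix (shift^[k] ω) t)))
      ≤ c⁻¹ ^ 3 * ((c * Real.exp (birkhoff φ k ω - k * P)) *
          (c * Real.exp (birkhoff φ t (shift^[k] ω) - t * P))) := by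
        gcongr
        · exact upper ω k hk
        · exact upper _ t ht
    _ = c⁻¹ * Real.exp (birkhoff φ (k + t) ω - (k + t : ℕ) * P) := by
        have hexp : birkhoff φ (k + t) ω - (k + t : ℕ) * P =
            (birkhoff φ k ω - k * P) + (birkhoff φ t (shift^[k] ω) - t * P) := by
          rw [birkhoff_add]
          push_cast
          ring
        rw [hexp, Real.exp_add]
        field_simp
    _ ≤ _ := lower ω (k + t) (Nat.add_pos_left hk t)

/-- For every nonempty word `x`, the cylinder `[x]` has at most `δ⁻¹` times the measure of each of
its admissible subcylinders `[xb]`. Gibbs measures have this property, and it is what makes `√μ`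
drop by a fixed factor at every branching of a nested sequence of cylinders. -/
def IsDoubling (A : Matrix (Fin l) (Fin l) ℕ) (μ : Measure (SigmaA l A)) (δ : ℝ) : Prop :=
  ∀ (x : List (Fin l)) (b : Fin l), x ≠ [] → Admissible A (x ++ [b]) →
    δ * μ.real (cylinder A x) ≤ μ.real (cylinder A (x ++ [b]))

lemma IsGibbs.exists_isDoubling (hG : IsGibbs φ P μ) (hA : Primitive A) :
    ∃ δ : ℝ, 0 < δ ∧ IsDoubling A μ δ := by
  obtain ⟨C, hC, hqb⟩ := hG.exists_quasi_bernoulli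
  rcases isEmpty_or_nonempty (Fin l) with hl | hl
  · exact ⟨1, one_pos, fun _ b => hl.elim b⟩
  obtain ⟨b₀, hb₀⟩ := Finite.exists_min fun b : Fin l => μ.real (cylinder A [b])
  refine ⟨C * μ.real (cylinder A [b₀]),
    mul_pos hC (hG.measureReal_cylinder_pos hA (admissible_singleton b₀)), fun x b hx hxb => ?_⟩
  obtain ⟨ω, hω⟩ := hxb.cylinder_nonempty hA.exists_successor
  obtain ⟨hωx, hωb⟩ := mem_cylinder_append_singleton.1 hω
  have htail : wordPrefix (shift^[x.length] ω) 1 = [b] := by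
    simp [wordPrefix, coe_shift_iterate, hωb]
  have h := hqb ω x.length 1 (List.length_pos_iff.2 hx) one_pos
  rw [htail, wordPrefix_succ, mem_cylinder_iff.1 hωx, hωb] at h
  calc C * μ.real (cylinder A [b₀]) * μ.real (cylinder A x)
      = C * (μ.real (cylinder A x) * μ.real (cylinder A [b₀])) := by ring
    _ ≤ C * (μ.real (cylinder A x) * μ.real (cylinder A [b])) := by gcongr C * (_ * ?_); exact hb₀ b
    _ ≤ _ := h

end Gibbs

section CylinderFunctions

variable {A : Matrix (Fin l) (Fin l) ℕ}

/-- The space of functions on `Σ_A` depending only on the first `N` coordinates: the finite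
dimensional subspaces of `L²(μ)` which exhaust `H₀` and are preserved by the Dirac operator. -/
def cylinderFunctions (A : Matrix (Fin l) (Fin l) ℕ) (N : ℕ) : Submodule ℂ (SigmaA l A → ℂ) where
  carrier := {f | ∀ ω υ, wordPrefix ω N = wordPrefix υ N → f ω = f υ}
  add_mem' hf hg ω υ h := congrArg₂ (· + ·) (hf ω υ h) (hg ω υ h)
  zero_mem' _ _ _ := rfl
  smul_mem' c _ hf ω υ h := congrArg (c * ·) (hf ω υ h)

lemma cylinderFunctions_mono : Monotone (cylinderFunctions A) := fun _ _ hMN _ hf ω υ h =>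
  hf ω υ (wordPrefix_eq_of_le h hMN)

lemma eq_of_mem_cylinder {f : SigmaA l A → ℂ} {y : List (Fin l)}
    (hf : f ∈ cylinderFunctions A y.length) {ω υ : SigmaA l A} (hω : ω ∈ cylinder A y)
    (hυ : υ ∈ cylinder A y) : f ω = f υ :=
  hf ω υ ((mem_cylinder_iff.1 hω).trans (mem_cylinder_iff.1 hυ).symm)

lemma indC_of_mem {x : List (Fin l)} {ω : SigmaA l A} (h : ω ∈ cylinder A x) : indC A x ω = 1 :=
  Set.indicator_of_mem h _

lemma indC_of_notMem {x : List (Fin l)} {ω : SigmaA l A} (h : ω ∉ cylinder A x) :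
    indC A x ω = 0 :=
  Set.indicator_of_notMem h _

lemma indC_nil : indC A [] = 1 := by
  rw [indC, cylinder_nil, Set.indicator_univ]

lemma sum_indC_singleton : ∑ b, indC A [b] = 1 := by
  ext ω
  rw [Finset.sum_apply, Finset.sum_eq_single_of_mem (ω.1 0) (Finset.mem_univ _)]
  · exact indC_of_mem (mem_cylinder_singleton.2 rfl)
  · exact fun b _ hb => indC_of_notMem fun h => hb (mem_cylinder_singleton.1 h).symm

lemma indC_mem_cylinderFunctions (x : List (Fin l)) :
    indC A x ∈ cylinderFunctions A x.length := by
  intro ω υ h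
  by_cases hω : ω ∈ cylinder A x
  · rw [indC_of_mem hω, indC_of_mem (mem_cylinder_iff.2 (h ▸ mem_cylinder_iff.1 hω))]
  · rw [indC_of_notMem hω, indC_of_notMem fun hυ =>
      hω (mem_cylinder_iff.2 (h.trans (mem_cylinder_iff.1 hυ)))]

lemma one_mem_cylinderFunctions (N : ℕ) : (1 : SigmaA l A → ℂ) ∈ cylinderFunctions A N :=
  fun _ _ _ => rfl

lemma one_mem_H0 : (1 : SigmaA l A → ℂ) ∈ H0 A :=
  Submodule.subset_span ⟨[], Or.inl rfl, indC_nil.symm⟩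

lemma exists_mem_cylinderFunctions {f : SigmaA l A → ℂ} (hf : f ∈ H0 A) :
    ∃ N, f ∈ cylinderFunctions A N := by
  have hle : H0 A ≤ ⨆ N, cylinderFunctions A N := by
    refine Submodule.span_le.2 ?_
    rintro _ ⟨x, -, rfl⟩
    exact Submodule.mem_iSup_of_mem x.length (indC_mem_cylinderFunctions x)
  exact (Submodule.mem_iSup_of_directed _ cylinderFunctions_mono.directed_le).1 (hle hf)

lemma memLp_of_mem_cylinderFunctions {μ : Measure (SigmaA l A)} [IsFiniteMeasure μ] {N : ℕ}
    {f : SigmaA l A → ℂ} (hf : f ∈ cylinderFunctions A N) (p : ℝ≥0∞) : MemLp f p μ := by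
  let R : SigmaA l A → Fin N → Fin l := fun ω i => ω.1 i
  have hR : Measurable R :=
    measurable_pi_lambda _ fun i => (measurable_pi_apply _).comp measurable_subtype_coe
  have hfac : Function.FactorsThrough f R := fun ω υ h => hf ω υ (congrArg List.ofFn h)
  have hfR : Function.extend R f 0 ∘ R = f := funext fun ω => hfac.extend_apply 0 ω
  rw [← hfR]
  exact MemLp.comp_of_map MemLp.of_discrete hR.aemeasurable

lemma memLp_indC {μ : Measure (SigmaA l A)} [IsFiniteMeasure μ] (x : List (Fin l)) (p : ℝ≥0∞) :
    MemLp (indC A x) p μ :=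
  memLp_of_mem_cylinderFunctions (indC_mem_cylinderFunctions x) p

lemma measurableSet_cylinder (x : List (Fin l)) : MeasurableSet (cylinder A x) := by
  have : cylinder A x = ⋂ (i : ℕ) (h : i < x.length), {ω : SigmaA l A | ω.1 i = x[i]} := by
    ext ω
    simp [cylinder]
  rw [this]
  exact .iInter fun i => .iInter fun h =>
    measurableSet_eq_fun ((measurable_pi_apply i).comp measurable_subtype_coe) measurable_const

lemma setAverage_wordPrefix {μ : Measure (SigmaA l A)} [IsFiniteMeasure μ] {N : ℕ}
    {f : SigmaA l A → ℂ} (hf : f ∈ cylinderFunctions A N) (ω : SigmaA l A)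
    (hω : 0 < μ.real (cylinder A (wordPrefix ω N))) :
    ⨍ υ in cylinder A (wordPrefix ω N), f υ ∂μ = f ω := by
  have hconst : ∀ υ ∈ cylinder A (wordPrefix ω N), f υ = f ω := fun υ hυ =>
    eq_of_mem_cylinder (by rwa [length_wordPrefix]) hυ (mem_cylinder_wordPrefix ω N)
  rw [setAverage_congr_fun (measurableSet_cylinder _) (.of_forall hconst),
    setAverage_const (ENNReal.toReal_pos_iff.1 hω).1.ne' (measure_ne_top _ _)]

end CylinderFunctions

section InnerMu

variable {A : Matrix (Fin l) (Fin l) ℕ} {μ : Measure (SigmaA l A)} {f g h : SigmaA l A → ℂ}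

lemma conj_innerMu (f g : SigmaA l A → ℂ) :
    (starRingEnd ℂ) (innerMu A μ f g) = innerMu A μ g f := by
  rw [innerMu, ← integral_conj, innerMu]
  simp only [map_mul, RCLike.conj_conj, mul_comm]

lemma innerMu_eq_inner (hf : MemLp f 2 μ) (hg : MemLp g 2 μ) :
    innerMu A μ f g = inner ℂ (hf.toLp f) (hg.toLp g) := by
  rw [L2.inner_def, innerMu]
  refine integral_congr_ae ?_
  filter_upwards [hf.coeFn_toLp, hg.coeFn_toLp] with ω hfω hgω
  rw [hfω, hgω, RCLike.inner_apply, mul_comm]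

lemma innerMu_add (hf : MemLp f 2 μ) (hg : MemLp g 2 μ) (hh : MemLp h 2 μ) :
    innerMu A μ f (g + h) = innerMu A μ f g + innerMu A μ f h := by
  rw [innerMu_eq_inner hf (hg.add hh), MemLp.toLp_add hg hh, inner_add_right,
    ← innerMu_eq_inner hf hg, ← innerMu_eq_inner hf hh]

lemma innerMu_sub (hf : MemLp f 2 μ) (hg : MemLp g 2 μ) (hh : MemLp h 2 μ) :
    innerMu A μ f (g - h) = innerMu A μ f g - innerMu A μ f h := by
  rw [innerMu_eq_inner hf (hg.sub hh), MemLp.toLp_sub hg hh, inner_sub_right,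
    ← innerMu_eq_inner hf hg, ← innerMu_eq_inner hf hh]

lemma innerMu_smul (c : ℂ) (f g : SigmaA l A → ℂ) :
    innerMu A μ f (c • g) = c * innerMu A μ f g := by
  simp only [innerMu, Pi.smul_apply, smul_eq_mul, mul_left_comm _ c, integral_const_mul]

lemma innerMu_sum {ι : Type*} (s : Finset ι) {G : ι → SigmaA l A → ℂ} (hf : MemLp f 2 μ)
    (hG : ∀ i ∈ s, MemLp (G i) 2 μ) :
    innerMu A μ f (∑ i ∈ s, G i) = ∑ i ∈ s, innerMu A μ f (G i) := by
  simp only [innerMu, Finset.sum_apply, Finset.mul_sum]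
  exact integral_finsetSum _ fun i hi => hf.star.integrable_mul (hG i hi)

lemma norm_innerMu_le (hf : MemLp f 2 μ) (hg : MemLp g 2 μ) :
    ‖innerMu A μ f g‖ ≤ lpNorm f 2 μ * lpNorm g 2 μ := by
  rw [innerMu_eq_inner hf hg, ← toReal_eLpNorm hf.1, ← toReal_eLpNorm hg.1, ← Lp.norm_toLp f hf,
    ← Lp.norm_toLp g hg]
  exact norm_inner_le_norm _ _

lemma sq_lpNorm_two (hf : MemLp f 2 μ) : ((lpNorm f 2 μ ^ 2 : ℝ) : ℂ) = innerMu A μ f f := by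
  rw [innerMu_eq_inner hf hf, inner_self_eq_norm_sq_to_K, Lp.norm_toLp, toReal_eLpNorm hf.1]
  simp

lemma integral_indC (x : List (Fin l)) : ∫ ω, indC A x ω ∂μ = μ.real (cylinder A x) := by
  simp [indC, integral_indicator (measurableSet_cylinder x)]

lemma innerMu_one_left (f : SigmaA l A → ℂ) : innerMu A μ 1 f = ∫ ω, f ω ∂μ := by
  simp [innerMu]

lemma innerMu_indC_left (x : List (Fin l)) (f : SigmaA l A → ℂ) :
    innerMu A μ (indC A x) f = ∫ ω in cylinder A x, f ω ∂μ := by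
  rw [← integral_indicator (measurableSet_cylinder x), innerMu]
  refine integral_congr_ae (.of_forall fun ω => ?_)
  by_cases hω : ω ∈ cylinder A x <;> simp [hω, indC]

lemma innerMu_indC_one (x : List (Fin l)) :
    innerMu A μ (indC A x) 1 = μ.real (cylinder A x) := by
  simp [innerMu_indC_left]

lemma innerMu_indC_singleton (b b' : Fin l) :
    innerMu A μ (indC A [b]) (indC A [b']) =
      if b = b' then (μ.real (cylinder A [b]) : ℂ) else 0 := by
  rw [innerMu_indC_left]
  split_ifs with h
  · subst h
    rw [setIntegral_congr_fun (measurableSet_cylinder _) fun ω => indC_of_mem]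
    simp
  · refine setIntegral_eq_zero_of_forall_eq_zero fun ω hω => indC_of_notMem fun hω' => h ?_
    rw [← mem_cylinder_singleton.1 hω, mem_cylinder_singleton.1 hω']

lemma setAverage_cylinder (x : List (Fin l)) (f : SigmaA l A → ℂ) :
    ⨍ ω in cylinder A x, f ω ∂μ = (μ.real (cylinder A x) : ℂ)⁻¹ * innerMu A μ (indC A x) f := by
  rw [setAverage_eq, innerMu_indC_left, Complex.real_smul, Complex.ofReal_inv]

end InnerMu

section Haar

variable {A : Matrix (Fin l) (Fin l) ℕ} {μ : Measure (SigmaA l A)}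
  {θinv : List (Fin l) → ℕ → Fin l} {u : List (Fin l) → ℕ → ℕ → ℝ} {y z : List (Fin l)}
  {j j' m m' N : ℕ} {ω : SigmaA l A}

/-- The data entering the definition of the Haar functions: `μ` charges all cylinders, `θinv x`
enumerates the letters which may follow the word `x`, and the columns of `(u x m j)_{m,j}`, the
matrix of `U_x` in the basis `(f_{x,m})_m`, are orthonormal with last column the coordinates of
`μ([x])^{-1/2} (1, …, 1)`. -/
structure IsHaarFamily (A : Matrix (Fin l) (Fin l) ℕ) (μ : Measure (SigmaA l A))
    (θinv : List (Fin l) → ℕ → Fin l) (u : List (Fin l) → ℕ → ℕ → ℝ) : Prop where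
  pos : ∀ x, Admissible A x → 0 < μ.real (cylinder A x)
  bijOn : ∀ (x : List (Fin l)) (hx : Admissible A x),
    Set.BijOn (θinv x) (Set.Iio (alpha A x)) {y : Fin l | A (x.getLast hx.1) y = 1}
  orth : ∀ x, Admissible A x → ∀ j < alpha A x, ∀ j' < alpha A x,
    ∑ m ∈ Finset.range (alpha A x), u x m j * u x m j' = if j = j' then 1 else 0
  last : ∀ x, Admissible A x → ∀ m < alpha A x,
    u x m (alpha A x - 1) =
      (√(μ.real (cylinder A x)))⁻¹ * √(μ.real (cylinder A (child θinv x m)))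

lemma length_child (y : List (Fin l)) (m : ℕ) : (child θinv y m).length = y.length + 1 :=
  List.length_append

lemma mem_cylinder_child :
    ω ∈ cylinder A (child θinv y m) ↔ ω ∈ cylinder A y ∧ ω.1 y.length = θinv y m :=
  mem_cylinder_append_singleton

lemma haarFun_eq_sum_smul_indC (y : List (Fin l)) (j : ℕ) :
    haarFun A μ θinv u y j = ∑ m ∈ Finset.range (alpha A y),
      (((√(μ.real (cylinder A (child θinv y m))))⁻¹ * u y m j : ℝ) : ℂ) •
        indC A (child θinv y m) := by
  ext ω
  simp only [Finset.sum_apply]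
  rfl

lemma haarFun_mem_cylinderFunctions (y : List (Fin l)) (j : ℕ) :
    haarFun A μ θinv u y j ∈ cylinderFunctions A (y.length + 1) := by
  rw [haarFun_eq_sum_smul_indC]
  refine Submodule.sum_mem _ fun m _ => Submodule.smul_mem _ _ ?_
  rw [← length_child (θinv := θinv) y m]
  exact indC_mem_cylinderFunctions _

lemma memLp_haarFun [IsFiniteMeasure μ] (y : List (Fin l)) (j : ℕ) (p : ℝ≥0∞) :
    MemLp (haarFun A μ θinv u y j) p μ :=
  memLp_of_mem_cylinderFunctions (haarFun_mem_cylinderFunctions y j) p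

lemma haarFun_of_notMem (j : ℕ) (hω : ω ∉ cylinder A y) : haarFun A μ θinv u y j ω = 0 := by
  rw [haarFun]
  refine Finset.sum_eq_zero fun m _ => ?_
  rw [indC_of_notMem fun h => hω (mem_cylinder_child.1 h).1, mul_zero]

lemma conj_haarFun (y : List (Fin l)) (j : ℕ) (ω : SigmaA l A) :
    (starRingEnd ℂ) (haarFun A μ θinv u y j ω) = haarFun A μ θinv u y j ω := by
  rw [haarFun, map_sum]
  refine Finset.sum_congr rfl fun m _ => ?_
  rw [map_mul, Complex.conj_ofReal]
  by_cases hω : ω ∈ cylinder A (child θinv y m)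
  · rw [indC_of_mem hω, map_one]
  · rw [indC_of_notMem hω, map_zero]

namespace IsHaarFamily

variable (H : IsHaarFamily A μ θinv u) (hy : Admissible A y)

include H hy

lemma admissible_child (hm : m < alpha A y) : Admissible A (child θinv y m) :=
  hy.append_singleton ((H.bijOn y hy).mapsTo hm)

lemma exists_mem_cylinder_child (hω : ω ∈ cylinder A y) :
    ∃ m < alpha A y, ω ∈ cylinder A (child θinv y m) := by
  obtain ⟨m, hm, hθ⟩ := (H.bijOn y hy).surjOn (getLast_transition hy.1 hω)
  exact ⟨m, hm, mem_cylinder_child.2 ⟨hω, hθ.symm⟩⟩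

lemma eq_of_mem_cylinder_child (hm : m < alpha A y) (hm' : m' < alpha A y)
    (hω : ω ∈ cylinder A (child θinv y m)) (hω' : ω ∈ cylinder A (child θinv y m')) : m = m' :=
  (H.bijOn y hy).injOn hm hm'
    ((mem_cylinder_child.1 hω).2.symm.trans (mem_cylinder_child.1 hω').2)

lemma indC_child_of_mem_child (hm : m < alpha A y) (hm' : m' < alpha A y)
    (hω : ω ∈ cylinder A (child θinv y m')) :
    indC A (child θinv y m) ω = if m = m' then 1 else 0 := by
  split_ifs with h
  · exact indC_of_mem (h ▸ hω)
  · exact indC_of_notMem fun hω' => h (H.eq_of_mem_cylinder_child hy hm hm' hω' hω)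

lemma haarFun_of_mem_child (hm : m < alpha A y) (hω : ω ∈ cylinder A (child θinv y m)) :
    haarFun A μ θinv u y j ω = ((√(μ.real (cylinder A (child θinv y m))))⁻¹ * u y m j : ℝ) := by
  rw [haarFun, Finset.sum_eq_single_of_mem m (Finset.mem_range.2 hm), indC_of_mem hω, mul_one]
  · rfl
  · intro m' hm' hne
    rw [H.indC_child_of_mem_child hy (Finset.mem_range.1 hm') hm hω, if_neg hne, mul_zero]

lemma eq_sum_smul_indC_child {f : SigmaA l A → ℂ} {c : ℕ → ℂ} (hf : ∀ ω ∉ cylinder A y, f ω = 0)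
    (hc : ∀ m < alpha A y, ∀ ω ∈ cylinder A (child θinv y m), f ω = c m) :
    f = ∑ m ∈ Finset.range (alpha A y), c m • indC A (child θinv y m) := by
  ext ω
  simp only [Finset.sum_apply, Pi.smul_apply, smul_eq_mul]
  by_cases hω : ω ∈ cylinder A y
  · obtain ⟨m, hm, hωm⟩ := H.exists_mem_cylinder_child hy hω
    rw [Finset.sum_eq_single_of_mem m (Finset.mem_range.2 hm), indC_of_mem hωm, mul_one,
      hc m hm ω hωm]
    intro m' hm' hne
    rw [H.indC_child_of_mem_child hy (Finset.mem_range.1 hm') hm hωm, if_neg hne, mul_zero]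
  · rw [hf ω hω, Finset.sum_eq_zero]
    intro m _
    rw [indC_of_notMem fun h => hω (mem_cylinder_child.1 h).1, mul_zero]

lemma integral_eq_sum_child [IsFiniteMeasure μ] {f : SigmaA l A → ℂ} {c : ℕ → ℂ}
    (hf : ∀ ω ∉ cylinder A y, f ω = 0)
    (hc : ∀ m < alpha A y, ∀ ω ∈ cylinder A (child θinv y m), f ω = c m) :
    ∫ ω, f ω ∂μ =
      ∑ m ∈ Finset.range (alpha A y), c m * μ.real (cylinder A (child θinv y m)) := by
  rw [H.eq_sum_smul_indC_child hy hf hc]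
  simp only [Finset.sum_apply, Pi.smul_apply, smul_eq_mul]
  rw [integral_finsetSum _ fun m _ => ((memLp_indC _ 1).integrable le_rfl).const_mul _]
  simp only [integral_const_mul, integral_indC]

lemma sum_measureReal_child [IsFiniteMeasure μ] :
    ∑ m ∈ Finset.range (alpha A y), μ.real (cylinder A (child θinv y m)) =
      μ.real (cylinder A y) := by
  have h := H.integral_eq_sum_child (μ := μ) (f := indC A y) (c := 1) hy
    (fun _ => indC_of_notMem) fun m _ ω hω => indC_of_mem (mem_cylinder_child.1 hω).1
  simp only [integral_indC, Pi.one_apply, one_mul] at h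
  exact_mod_cast h.symm

lemma sqrt_measureReal_child (hm : m < alpha A y) :
    √(μ.real (cylinder A (child θinv y m))) =
      √(μ.real (cylinder A y)) * u y m (alpha A y - 1) := by
  rw [H.last y hy m hm, mul_inv_cancel_left₀ (Real.sqrt_pos.2 (H.pos y hy)).ne']

lemma measureReal_child_pos (hm : m < alpha A y) :
    0 < μ.real (cylinder A (child θinv y m)) :=
  H.pos _ (H.admissible_child hy hm)

lemma integral_haarFun [IsFiniteMeasure μ] (hj : j < alpha A y - 1) :
    ∫ ω, haarFun A μ θinv u y j ω ∂μ = 0 := by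
  rw [H.integral_eq_sum_child hy (fun _ => haarFun_of_notMem j) fun m hm _ =>
    H.haarFun_of_mem_child hy hm]
  have hterm : ∀ m ∈ Finset.range (alpha A y),
      (√(μ.real (cylinder A (child θinv y m))))⁻¹ * u y m j *
        μ.real (cylinder A (child θinv y m)) =
      √(μ.real (cylinder A y)) * (u y m j * u y m (alpha A y - 1)) := by
    intro m hm
    have hm := Finset.mem_range.1 hm
    rw [mul_left_comm, ← H.sqrt_measureReal_child hy hm]
    have hpos := H.measureReal_child_pos hy hm
    field_simp
    rw [Real.sq_sqrt hpos.le, mul_comm]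
  have horth := H.orth y hy j (by omega) (alpha A y - 1) (by omega)
  rw [if_neg (by omega)] at horth
  exact_mod_cast (Finset.sum_congr rfl hterm).trans (by rw [← Finset.mul_sum, horth, mul_zero])

lemma innerMu_haarFun_of_mem_cylinderFunctions [IsFiniteMeasure μ] (hj : j < alpha A y - 1)
    {f : SigmaA l A → ℂ} (hf : f ∈ cylinderFunctions A y.length) :
    innerMu A μ (haarFun A μ θinv u y j) f = 0 := by
  rcases (cylinder A y).eq_empty_or_nonempty with hempty | ⟨υ, hυ⟩
  · have h0 : ∀ ω, haarFun A μ θinv u y j ω = 0 := fun ω =>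
      haarFun_of_notMem j (hempty ▸ Set.notMem_empty ω)
    simp [innerMu, h0]
  have hconst : ∀ ω, (starRingEnd ℂ) (haarFun A μ θinv u y j ω) * f ω =
      haarFun A μ θinv u y j ω * f υ := by
    intro ω
    rw [conj_haarFun]
    by_cases hω : ω ∈ cylinder A y
    · rw [eq_of_mem_cylinder hf hω hυ]
    · rw [haarFun_of_notMem j hω, zero_mul, zero_mul]
  simp only [innerMu, hconst, integral_mul_const, H.integral_haarFun hy hj, zero_mul]

lemma innerMu_haarFun_haarFun [IsFiniteMeasure μ] (hj : j < alpha A y) (hj' : j' < alpha A y) :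
    innerMu A μ (haarFun A μ θinv u y j) (haarFun A μ θinv u y j') = if j = j' then 1 else 0 := by
  have hval : ∀ m < alpha A y, ∀ ω ∈ cylinder A (child θinv y m),
      (starRingEnd ℂ) (haarFun A μ θinv u y j ω) * haarFun A μ θinv u y j' ω =
        ((μ.real (cylinder A (child θinv y m)))⁻¹ * (u y m j * u y m j') : ℝ) := by
    intro m hm ω hω
    rw [conj_haarFun, H.haarFun_of_mem_child hy hm hω, H.haarFun_of_mem_child hy hm hω,
      ← Complex.ofReal_mul, mul_mul_mul_comm, ← mul_inv,
      Real.mul_self_sqrt measureReal_nonneg]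
  rw [innerMu, H.integral_eq_sum_child hy
    (fun ω hω => by rw [haarFun_of_notMem j' hω, mul_zero]) hval]
  have hterm : ∀ m ∈ Finset.range (alpha A y),
      (μ.real (cylinder A (child θinv y m)))⁻¹ * (u y m j * u y m j') *
        μ.real (cylinder A (child θinv y m)) = u y m j * u y m j' := by
    intro m hm
    have hpos := H.measureReal_child_pos hy (Finset.mem_range.1 hm)
    field_simp
  have hsum := (Finset.sum_congr rfl hterm).trans (H.orth y hy j hj j' hj')
  split_ifs at hsum ⊢ <;> exact_mod_cast hsum

lemma innerMu_haarFun_haarFun_of_ne [IsFiniteMeasure μ] (hz : Admissible A z) (hyz : y ≠ z)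
    (hj : j < alpha A y - 1) (hj' : j' < alpha A z - 1) :
    innerMu A μ (haarFun A μ θinv u y j) (haarFun A μ θinv u z j') = 0 := by
  rcases lt_trichotomy z.length y.length with h | h | h
  · exact H.innerMu_haarFun_of_mem_cylinderFunctions hy hj
      (cylinderFunctions_mono h (haarFun_mem_cylinderFunctions z j'))
  · have hdisj : ∀ ω,
        (starRingEnd ℂ) (haarFun A μ θinv u y j ω) * haarFun A μ θinv u z j' ω = 0 := by
      intro ω
      by_cases hω : ω ∈ cylinder A y
      · rw [haarFun_of_notMem j' fun hω' => hyz ?_, mul_zero]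
        rw [← mem_cylinder_iff.1 hω, ← h, mem_cylinder_iff.1 hω']
      · rw [haarFun_of_notMem j hω, map_zero, zero_mul]
    simp [innerMu, hdisj]
  · rw [← conj_innerMu, H.innerMu_haarFun_of_mem_cylinderFunctions hz hj'
      (cylinderFunctions_mono h (haarFun_mem_cylinderFunctions y j)), map_zero]

lemma abs_coeff_le_one (hm : m < alpha A y) (hj : j < alpha A y) : |u y m j| ≤ 1 := by
  rw [← sq_le_one_iff_abs_le_one, sq]
  calc u y m j * u y m j
      ≤ ∑ m ∈ Finset.range (alpha A y), u y m j * u y m j :=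
        Finset.single_le_sum (fun m _ => mul_self_nonneg (u y m j)) (Finset.mem_range.2 hm)
    _ = 1 := by rw [H.orth y hy j hj j hj, if_pos rfl]

lemma sum_coeff_mul_coeff (hm : m < alpha A y) (hm' : m' < alpha A y) :
    ∑ j ∈ Finset.range (alpha A y), u y m j * u y m' j = if m = m' then 1 else 0 := by
  let U : Matrix (Fin (alpha A y)) (Fin (alpha A y)) ℝ := .of fun m j => u y m j
  have hcol : U.transpose * U = 1 := by
    ext j j'
    rw [Matrix.mul_apply, Matrix.one_apply]
    simp only [U, Matrix.transpose_apply, Matrix.of_apply, Fin.ext_iff]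
    rw [← H.orth y hy j j.2 j' j'.2, Finset.sum_range]
  have hrow := Matrix.ext_iff.2 (mul_eq_one_comm.1 hcol) ⟨m, hm⟩ ⟨m', hm'⟩
  rw [Matrix.mul_apply, Matrix.one_apply] at hrow
  simpa only [U, Matrix.transpose_apply, Matrix.of_apply, Fin.ext_iff, Finset.sum_range] using hrow

lemma sum_coeff_mul_coeff_pred (hm : m < alpha A y) (hm' : m' < alpha A y) :
    ∑ j ∈ Finset.range (alpha A y - 1), u y m j * u y m' j = (if m = m' then 1 else 0) -
      (μ.real (cylinder A y))⁻¹ * (√(μ.real (cylinder A (child θinv y m))) *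
        √(μ.real (cylinder A (child θinv y m')))) := by
  have hrow := H.sum_coeff_mul_coeff hy hm hm'
  rw [← Nat.sub_add_cancel (show 1 ≤ alpha A y by omega), Finset.sum_range_succ,
    H.last y hy m hm, H.last y hy m' hm', mul_mul_mul_comm, ← mul_inv,
    Real.mul_self_sqrt measureReal_nonneg] at hrow
  exact eq_sub_of_add_eq hrow

lemma smul_indC_child_sub_smul_indC (hm : m < alpha A y) :
    (μ.real (cylinder A (child θinv y m)) : ℂ)⁻¹ • indC A (child θinv y m) -
        (μ.real (cylinder A y) : ℂ)⁻¹ • indC A y =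
      ∑ j ∈ Finset.range (alpha A y - 1),
        (((√(μ.real (cylinder A (child θinv y m))))⁻¹ * u y m j : ℝ) : ℂ) •
          haarFun A μ θinv u y j := by
  ext ω
  simp only [Pi.sub_apply, Pi.smul_apply, Finset.sum_apply, smul_eq_mul]
  by_cases hω : ω ∈ cylinder A y
  · obtain ⟨m', hm', hωm'⟩ := H.exists_mem_cylinder_child hy hω
    have hsum : ∑ j ∈ Finset.range (alpha A y - 1),
        ((√(μ.real (cylinder A (child θinv y m))))⁻¹ * u y m j) *
          ((√(μ.real (cylinder A (child θinv y m'))))⁻¹ * u y m' j) =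
        (μ.real (cylinder A (child θinv y m)))⁻¹ * (if m = m' then 1 else 0) -
          (μ.real (cylinder A y))⁻¹ := by
      simp only [mul_mul_mul_comm _ (u y m _)]
      rw [← Finset.mul_sum, H.sum_coeff_mul_coeff_pred hy hm hm']
      have hpos := Real.sqrt_pos.2 (H.measureReal_child_pos hy hm)
      have hpos' := Real.sqrt_pos.2 (H.measureReal_child_pos hy hm')
      rw [mul_sub]
      congr 1
      · split_ifs with h
        · rw [← h, ← mul_inv, Real.mul_self_sqrt measureReal_nonneg]
        · rw [mul_zero, mul_zero]
      · field_simp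
    rw [indC_of_mem hω, mul_one, H.indC_child_of_mem_child hy hm hm' hωm']
    simp only [H.haarFun_of_mem_child hy hm' hωm']
    split_ifs at hsum ⊢ <;> exact_mod_cast hsum.symm
  · simp [haarFun_of_notMem _ hω, indC_of_notMem hω,
      indC_of_notMem fun h => hω (mem_cylinder_child.1 h).1]

lemma setAverage_child_sub_setAverage [IsFiniteMeasure μ] (hm : m < alpha A y)
    {f : SigmaA l A → ℂ} (hf : MemLp f 2 μ) :
    ⨍ ω in cylinder A (child θinv y m), f ω ∂μ - ⨍ ω in cylinder A y, f ω ∂μ =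
      ∑ j ∈ Finset.range (alpha A y - 1),
        (((√(μ.real (cylinder A (child θinv y m))))⁻¹ * u y m j : ℝ) : ℂ) *
          innerMu A μ (haarFun A μ θinv u y j) f := by
  have hchild : MemLp (indC A (child θinv y m)) 2 μ := memLp_indC _ 2
  have h := congrArg (innerMu A μ f) (H.smul_indC_child_sub_smul_indC hy hm)
  rw [innerMu_sub hf (hchild.const_smul _) ((memLp_indC y 2).const_smul _),
    innerMu_sum _ hf fun j _ => (memLp_haarFun y j 2).const_smul _] at h
  simp only [innerMu_smul] at h
  have hconj := congrArg (starRingEnd ℂ) h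
  simp only [map_sub, map_mul, map_sum, map_inv₀, Complex.conj_ofReal, conj_innerMu] at hconj
  rw [setAverage_cylinder, setAverage_cylinder, hconj]

end IsHaarFamily

end Haar

section Dirac

variable {A : Matrix (Fin l) (Fin l) ℕ} {μ : Measure (SigmaA l A)}
  {θinv : List (Fin l) → ℕ → Fin l} {u : List (Fin l) → ℕ → ℕ → ℝ} {f g : SigmaA l A → ℂ}
  {y : List (Fin l)} {j m N : ℕ}

/-- The admissible words of length less than `N`, which index the Haar functions entering `D f`
when `f` depends only on the first `N` coordinates. -/
noncomputable def admWords (A : Matrix (Fin l) (Fin l) ℕ) (N : ℕ) : Finset (List (Fin l)) :=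
  ((List.finite_length_lt (Fin l) N).inter_of_right {y | Admissible A y}).toFinset

lemma mem_admWords : y ∈ admWords A N ↔ Admissible A y ∧ y.length < N :=
  Set.Finite.mem_toFinset _

namespace IsHaarFamily

variable (H : IsHaarFamily A μ θinv u)

include H

lemma Dop_eq_sum [IsFiniteMeasure μ] (hf : f ∈ cylinderFunctions A N) :
    Dop A μ θinv u f =
      ∑ b, ((μ.real (cylinder A [b]) : ℂ)⁻¹ * innerMu A μ (indC A [b]) f) • indC A [b] -
        (∫ ω, f ω ∂μ) • 1 +
      ∑ y ∈ admWords A N, (((alpha A y - 1) / μ.real (cylinder A y) : ℝ) : ℂ) •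
        ∑ j ∈ Finset.range (alpha A y - 1),
          innerMu A μ (haarFun A μ θinv u y j) f • haarFun A μ θinv u y j := by
  ext ω
  simp only [Dop, Pi.add_apply, Pi.sub_apply, Pi.smul_apply, Finset.sum_apply, smul_eq_mul,
    indC_nil, innerMu_one_left]
  rw [tsum_eq_sum (s := admWords A N)]
  · congr 1
    exact Finset.sum_congr rfl fun y hy =>
      Set.indicator_of_mem (s := {y | Admissible A y}) (mem_admWords.1 hy).1 _
  · intro y hy
    refine Set.indicator_apply_eq_zero.2 fun (hadm : Admissible A y) => ?_
    have hlen : N ≤ y.length := not_lt.1 fun hlt => hy (mem_admWords.2 ⟨hadm, hlt⟩)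
    rw [Finset.sum_eq_zero, mul_zero]
    intro j hj
    rw [H.innerMu_haarFun_of_mem_cylinderFunctions hadm (Finset.mem_range.1 hj)
      (cylinderFunctions_mono hlen hf), zero_mul]

lemma Dop_mem_cylinderFunctions [IsFiniteMeasure μ] (hf : f ∈ cylinderFunctions A N)
    (hN : 0 < N) : Dop A μ θinv u f ∈ cylinderFunctions A N := by
  rw [H.Dop_eq_sum hf]
  refine Submodule.add_mem _ (Submodule.sub_mem _ (Submodule.sum_mem _ fun b _ => ?_) ?_)
    (Submodule.sum_mem _ fun y hy => Submodule.smul_mem _ _ (Submodule.sum_mem _ fun j _ => ?_))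
  · exact Submodule.smul_mem _ _ (cylinderFunctions_mono hN (indC_mem_cylinderFunctions [b]))
  · exact Submodule.smul_mem _ _ (one_mem_cylinderFunctions N)
  · exact Submodule.smul_mem _ _
      (cylinderFunctions_mono (mem_admWords.1 hy).2 (haarFun_mem_cylinderFunctions y j))

lemma memLp_Dop [IsFiniteMeasure μ] (hf : f ∈ cylinderFunctions A N) :
    MemLp (Dop A μ θinv u f) 2 μ :=
  memLp_of_mem_cylinderFunctions
    (H.Dop_mem_cylinderFunctions (cylinderFunctions_mono N.le_succ hf) N.succ_pos) 2

lemma innerMu_Dop [IsFiniteMeasure μ] (hf : f ∈ cylinderFunctions A N) (hg : MemLp g 2 μ) :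
    innerMu A μ g (Dop A μ θinv u f) =
      ∑ b, (μ.real (cylinder A [b]) : ℂ)⁻¹ * innerMu A μ (indC A [b]) f *
          innerMu A μ g (indC A [b]) -
        (∫ ω, f ω ∂μ) * innerMu A μ g 1 +
      ∑ y ∈ admWords A N, (((alpha A y - 1) / μ.real (cylinder A y) : ℝ) : ℂ) *
        ∑ j ∈ Finset.range (alpha A y - 1),
          innerMu A μ (haarFun A μ θinv u y j) f * innerMu A μ g (haarFun A μ θinv u y j) := by
  have hcyl : ∀ (b : Fin l) (c : ℂ), MemLp (c • indC A [b]) 2 μ := fun b c =>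
    (memLp_indC [b] 2).const_smul c
  have hconst : ∀ c : ℂ, MemLp (c • (1 : SigmaA l A → ℂ)) 2 μ := fun c =>
    (memLp_const (1 : ℂ)).const_smul c
  have hhaar : ∀ (y : List (Fin l)) (j : ℕ) (c : ℂ), MemLp (c • haarFun A μ θinv u y j) 2 μ :=
    fun y j c => (memLp_haarFun y j 2).const_smul c
  have hlevel := fun y => memLp_finsetSum' (Finset.range (alpha A y - 1)) fun j _ =>
    hhaar y j (innerMu A μ (haarFun A μ θinv u y j) f)
  rw [H.Dop_eq_sum hf, innerMu_add hg
      ((memLp_finsetSum' _ fun b _ => hcyl b _).sub (hconst _))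
      (memLp_finsetSum' _ fun y _ => (hlevel y).const_smul _),
    innerMu_sub hg (memLp_finsetSum' _ fun b _ => hcyl b _) (hconst _),
    innerMu_sum _ hg fun b _ => hcyl b _,
    innerMu_sum _ hg fun y _ => (hlevel y).const_smul _]
  simp only [innerMu_smul, innerMu_sum _ hg fun j _ => hhaar _ j _]

lemma Dop_one [IsProbabilityMeasure μ] : Dop A μ θinv u 1 = 0 := by
  have hwords : admWords A 0 = ∅ := by
    ext y
    simp [mem_admWords]
  have hmul : ∀ b : Fin l, (μ.real (cylinder A [b]) : ℂ)⁻¹ * μ.real (cylinder A [b]) = 1 :=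
    fun b => inv_mul_cancel₀ (by exact_mod_cast (H.pos _ (admissible_singleton b)).ne')
  rw [H.Dop_eq_sum (one_mem_cylinderFunctions 0), hwords]
  simp [innerMu_indC_one, hmul, sum_indC_singleton]

lemma innerMu_haarFun_Dop [IsFiniteMeasure μ] (hf : f ∈ cylinderFunctions A N)
    (hy : Admissible A y) (hj : j < alpha A y - 1) :
    innerMu A μ (haarFun A μ θinv u y j) (Dop A μ θinv u f) =
      (((alpha A y - 1) / μ.real (cylinder A y) : ℝ) : ℂ) *
        innerMu A μ (haarFun A μ θinv u y j) f := by
  have hlen : 0 < y.length := List.length_pos_iff.2 hy.1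
  have hcyl : ∀ b : Fin l, innerMu A μ (haarFun A μ θinv u y j) (indC A [b]) = 0 := fun b =>
    H.innerMu_haarFun_of_mem_cylinderFunctions hy hj
      (cylinderFunctions_mono hlen (indC_mem_cylinderFunctions [b]))
  have hone : innerMu A μ (haarFun A μ θinv u y j) 1 = 0 :=
    H.innerMu_haarFun_of_mem_cylinderFunctions hy hj (one_mem_cylinderFunctions _)
  rw [H.innerMu_Dop (cylinderFunctions_mono (le_max_left N (y.length + 1)) hf)
    (memLp_haarFun y j 2)]
  simp only [hcyl, hone, mul_zero, Finset.sum_const_zero, sub_zero, zero_add]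
  rw [Finset.sum_eq_single_of_mem y (mem_admWords.2 ⟨hy, by omega⟩),
    Finset.sum_eq_single_of_mem j (Finset.mem_range.2 hj),
    H.innerMu_haarFun_haarFun hy (by omega) (by omega), if_pos rfl, mul_one]
  · intro j' hj' hne
    have := Finset.mem_range.1 hj'
    rw [H.innerMu_haarFun_haarFun hy (by omega) (by omega), if_neg hne.symm, mul_zero]
  · intro z hz hne
    rw [Finset.sum_eq_zero, mul_zero]
    intro j' hj'
    rw [H.innerMu_haarFun_haarFun_of_ne hy (mem_admWords.1 hz).1 hne.symm hj
      (Finset.mem_range.1 hj'), mul_zero]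

lemma innerMu_indC_singleton_Dop [IsFiniteMeasure μ] (hf : f ∈ cylinderFunctions A N)
    (b : Fin l) :
    innerMu A μ (indC A [b]) (Dop A μ θinv u f) =
      innerMu A μ (indC A [b]) f - (∫ ω, f ω ∂μ) * μ.real (cylinder A [b]) := by
  have hb : (μ.real (cylinder A [b]) : ℂ) ≠ 0 := by
    exact_mod_cast (H.pos _ (admissible_singleton b)).ne'
  rw [H.innerMu_Dop hf (memLp_indC [b] 2), Finset.sum_eq_zero (s := admWords A N), add_zero,
    innerMu_indC_one]
  · simp only [innerMu_indC_singleton, mul_ite, mul_zero, Finset.sum_ite_eq, Finset.mem_univ,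
      if_true]
    field_simp
  · intro y hy
    have hadm := (mem_admWords.1 hy).1
    rw [Finset.sum_eq_zero, mul_zero]
    intro j hj
    rw [← conj_innerMu (haarFun A μ θinv u y j), H.innerMu_haarFun_of_mem_cylinderFunctions hadm
      (Finset.mem_range.1 hj) (cylinderFunctions_mono (List.length_pos_iff.2 hadm.1)
        (indC_mem_cylinderFunctions [b])), map_zero, mul_zero]

end IsHaarFamily

end Dirac

section Oscillation

variable {A : Matrix (Fin l) (Fin l) ℕ} {μ : Measure (SigmaA l A)}
  {θinv : List (Fin l) → ℕ → Fin l} {u : List (Fin l) → ℕ → ℕ → ℝ} {f : SigmaA l A → ℂ}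
  {y : List (Fin l)} {j m N : ℕ} {δ : ℝ}

lemma inv_sqrt_mul_le_sqrt_sub_sqrt {p q : ℝ} (hδ : 0 < δ) (hp : 0 < p) (hq : δ * p ≤ q)
    (hpq : δ * p ≤ p - q) : (√q)⁻¹ * p ≤ 2 / (δ * √δ) * (√p - √q) := by
  have : 0 < √δ := Real.sqrt_pos.2 hδ
  have hsp : 0 < √p := Real.sqrt_pos.2 hp
  have hlower : √δ * √p ≤ √q := by
    rw [← Real.sqrt_mul hδ.le]
    exact Real.sqrt_le_sqrt hq
  have hgap : δ / 2 * √p ≤ √p - √q := by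
    have hle : √q ≤ √p := Real.sqrt_le_sqrt (by nlinarith)
    have hdiff : (√p - √q) * (√p + √q) = p - q := by
      rw [mul_comm, ← sq_sub_sq, Real.sq_sqrt hp.le, Real.sq_sqrt (by nlinarith)]
    nlinarith [Real.sq_sqrt hp.le]
  calc (√q)⁻¹ * p ≤ (√δ * √p)⁻¹ * p := by gcongr
    _ = 2 / (δ * √δ) * (δ / 2 * √p) := by
      nth_rewrite 2 [← Real.mul_self_sqrt hp.le]
      field_simp
    _ ≤ 2 / (δ * √δ) * (√p - √q) := by gcongr

namespace IsHaarFamily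

variable (H : IsHaarFamily A μ θinv u)

include H

lemma lpNorm_haarFun [IsFiniteMeasure μ] (hy : Admissible A y) (hj : j < alpha A y) :
    lpNorm (haarFun A μ θinv u y j) 2 μ = 1 := by
  have h := sq_lpNorm_two (memLp_haarFun (μ := μ) (θinv := θinv) (u := u) y j 2)
  rw [H.innerMu_haarFun_haarFun hy hj hj, if_pos rfl] at h
  exact (pow_eq_one_iff_of_nonneg lpNorm_nonneg two_ne_zero).1 (by exact_mod_cast h)

lemma mul_norm_innerMu_haarFun_le [IsFiniteMeasure μ] (hf : f ∈ cylinderFunctions A N)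
    (hy : Admissible A y) (hj : j < alpha A y - 1) :
    (alpha A y - 1 : ℕ) * ‖innerMu A μ (haarFun A μ θinv u y j) f‖ ≤
      μ.real (cylinder A y) * lpNorm (Dop A μ θinv u f) 2 μ := by
  have hpos := H.pos y hy
  have hα : ((alpha A y - 1 : ℕ) : ℝ) = alpha A y - 1 := by
    rw [Nat.cast_sub (by omega), Nat.cast_one]
  have h := norm_innerMu_le (memLp_haarFun (θinv := θinv) (u := u) y j 2) (H.memLp_Dop hf)
  rw [H.innerMu_haarFun_Dop hf hy hj, H.lpNorm_haarFun hy (by omega), one_mul, norm_mul,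
    Complex.norm_real, ← hα, Real.norm_of_nonneg (by positivity), div_mul_eq_mul_div,
    div_le_iff₀ hpos] at h
  rwa [mul_comm (μ.real _)]

lemma norm_setAverage_child_sub_le [IsFiniteMeasure μ] (hf : f ∈ cylinderFunctions A N)
    (hy : Admissible A y) (hm : m < alpha A y) :
    ‖⨍ ω in cylinder A (child θinv y m), f ω ∂μ - ⨍ ω in cylinder A y, f ω ∂μ‖ ≤
      (√(μ.real (cylinder A (child θinv y m))))⁻¹ * μ.real (cylinder A y) *
        lpNorm (Dop A μ θinv u f) 2 μ := by
  have hcoeff : ∑ j ∈ Finset.range (alpha A y - 1), ‖innerMu A μ (haarFun A μ θinv u y j) f‖ ≤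
      μ.real (cylinder A y) * lpNorm (Dop A μ θinv u f) 2 μ := by
    rcases Nat.eq_zero_or_pos (alpha A y - 1) with hα | hα
    · rw [hα, Finset.sum_range_zero]
      exact mul_nonneg measureReal_nonneg lpNorm_nonneg
    refine le_of_mul_le_mul_left ?_ (Nat.cast_pos (α := ℝ).2 hα)
    rw [Finset.mul_sum]
    refine (Finset.sum_le_card_nsmul _ _ _ fun j hj =>
      H.mul_norm_innerMu_haarFun_le hf hy (Finset.mem_range.1 hj)).trans_eq ?_
    rw [Finset.card_range, nsmul_eq_mul]
  rw [H.setAverage_child_sub_setAverage hy hm (memLp_of_mem_cylinderFunctions hf 2), mul_assoc]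
  refine (norm_sum_le_of_le _ fun j hj => ?_).trans
    ((Finset.mul_sum ..).symm.trans_le (mul_le_mul_of_nonneg_left hcoeff (by positivity)))
  have hu : |u y m j| ≤ 1 := H.abs_coeff_le_one hy hm (by have := Finset.mem_range.1 hj; omega)
  rw [norm_mul, Complex.norm_real, norm_mul, Real.norm_of_nonneg (by positivity), Real.norm_eq_abs]
  gcongr
  exact mul_le_of_le_one_right (by positivity) hu

lemma norm_setAverage_singleton_sub_integral_le [IsProbabilityMeasure μ]
    (hf : f ∈ cylinderFunctions A N) (b : Fin l) :
    ‖⨍ ω in cylinder A [b], f ω ∂μ - ∫ ω, f ω ∂μ‖ ≤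
      (μ.real (cylinder A [b]))⁻¹ * lpNorm (Dop A μ θinv u f) 2 μ := by
  have hpos := H.pos _ (admissible_singleton b)
  have hindC : lpNorm (indC A [b]) 2 μ ≤ 1 := by
    have h := sq_lpNorm_two (memLp_indC (μ := μ) [b] 2)
    rw [innerMu_indC_singleton, if_pos rfl] at h
    rw [← sq_le_one_iff₀ lpNorm_nonneg, Complex.ofReal_injective h]
    exact measureReal_le_one
  have hdiff : ⨍ ω in cylinder A [b], f ω ∂μ - ∫ ω, f ω ∂μ =
      (μ.real (cylinder A [b]) : ℂ)⁻¹ * innerMu A μ (indC A [b]) (Dop A μ θinv u f) := by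
    have hb : (μ.real (cylinder A [b]) : ℂ) ≠ 0 := by exact_mod_cast hpos.ne'
    rw [H.innerMu_indC_singleton_Dop hf, setAverage_cylinder]
    field_simp
  rw [hdiff, norm_mul, norm_inv, Complex.norm_real, Real.norm_of_nonneg hpos.le]
  gcongr
  exact (norm_innerMu_le (memLp_indC [b] 2) (H.memLp_Dop hf)).trans
    (mul_le_of_le_one_left lpNorm_nonneg hindC)

lemma mul_measureReal_le_sub_measureReal_child [IsFiniteMeasure μ] (hμ : IsDoubling A μ δ)
    (hy : Admissible A y) (hm : m < alpha A y) (hα : alpha A y ≠ 1) :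
    δ * μ.real (cylinder A y) ≤
      μ.real (cylinder A y) - μ.real (cylinder A (child θinv y m)) := by
  obtain ⟨m', hm', hne⟩ : ∃ m' < alpha A y, m ≠ m' := by
    by_cases h : m = 0
    · exact ⟨1, by omega, by omega⟩
    · exact ⟨0, by omega, h⟩
  have hsum := Finset.add_le_sum (f := fun i => μ.real (cylinder A (child θinv y i)))
    (fun _ _ => measureReal_nonneg) (Finset.mem_range.2 hm) (Finset.mem_range.2 hm') hne
  rw [H.sum_measureReal_child hy] at hsum
  calc δ * μ.real (cylinder A y) ≤ μ.real (cylinder A (child θinv y m')) :=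
        hμ y (θinv y m') hy.1 (H.admissible_child hy hm')
    _ ≤ _ := le_sub_iff_add_le'.2 hsum

/-- The right-hand side telescopes along nested cylinders. -/
lemma norm_setAverage_child_sub_le_sqrt_sub_sqrt [IsFiniteMeasure μ] (hδ : 0 < δ)
    (hμ : IsDoubling A μ δ) (hf : f ∈ cylinderFunctions A N) (hy : Admissible A y)
    (hm : m < alpha A y) :
    ‖⨍ ω in cylinder A (child θinv y m), f ω ∂μ - ⨍ ω in cylinder A y, f ω ∂μ‖ ≤
      2 / (δ * √δ) * (√(μ.real (cylinder A y)) - √(μ.real (cylinder A (child θinv y m)))) *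
        lpNorm (Dop A μ θinv u f) 2 μ := by
  by_cases hα : alpha A y = 1
  · rw [H.setAverage_child_sub_setAverage hy hm (memLp_of_mem_cylinderFunctions hf 2), hα,
      Nat.sub_self, Finset.sum_range_zero, norm_zero]
    have hle : μ.real (cylinder A (child θinv y m)) ≤ μ.real (cylinder A y) :=
      measureReal_mono fun ω hω => (mem_cylinder_child.1 hω).1
    have := sub_nonneg.2 (Real.sqrt_le_sqrt hle)
    have := lpNorm_nonneg (f := Dop A μ θinv u f) (p := 2) (μ := μ)
    positivity
  · refine (H.norm_setAverage_child_sub_le hf hy hm).trans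
      (mul_le_mul_of_nonneg_right ?_ lpNorm_nonneg)
    exact inv_sqrt_mul_le_sqrt_sub_sqrt hδ (H.pos y hy)
      (hμ y (θinv y m) hy.1 (H.admissible_child hy hm))
      (H.mul_measureReal_le_sub_measureReal_child hμ hy hm hα)

lemma norm_setAverage_wordPrefix_sub_le [IsProbabilityMeasure μ] (hδ : 0 < δ)
    (hμ : IsDoubling A μ δ) (hf : f ∈ cylinderFunctions A N) (ω : SigmaA l A) (n : ℕ) :
    ‖⨍ υ in cylinder A (wordPrefix ω (n + 1)), f υ ∂μ - ⨍ υ in cylinder A [ω.1 0], f υ ∂μ‖ ≤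
      2 / (δ * √δ) * lpNorm (Dop A μ θinv u f) 2 μ := by
  set D := lpNorm (Dop A μ θinv u f) 2 μ
  have hD : 0 ≤ D := lpNorm_nonneg
  let s : ℕ → ℝ := fun k => √(μ.real (cylinder A (wordPrefix ω (k + 1))))
  have hstep : ∀ k < n, dist (⨍ υ in cylinder A (wordPrefix ω (k + 1)), f υ ∂μ)
      (⨍ υ in cylinder A (wordPrefix ω (k + 1 + 1)), f υ ∂μ) ≤
        2 / (δ * √δ) * (s k - s (k + 1)) * D := by
    intro k _
    have hadm := admissible_wordPrefix ω k.succ_pos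
    obtain ⟨m, hm, hωm⟩ := H.exists_mem_cylinder_child hadm (mem_cylinder_wordPrefix ω (k + 1))
    have hchild : wordPrefix ω (k + 1 + 1) = child θinv (wordPrefix ω (k + 1)) m := by
      rw [← mem_cylinder_iff.1 hωm, length_child, length_wordPrefix]
    simp only [s]
    rw [dist_comm, dist_eq_norm, hchild]
    exact H.norm_setAverage_child_sub_le_sqrt_sub_sqrt hδ hμ hf hadm hm
  have hfirst : wordPrefix ω (0 + 1) = [ω.1 0] := wordPrefix_succ ω 0
  rw [← hfirst, ← dist_eq_norm, dist_comm]
  calc dist (⨍ υ in cylinder A (wordPrefix ω (0 + 1)), f υ ∂μ)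
        (⨍ υ in cylinder A (wordPrefix ω (n + 1)), f υ ∂μ)
      ≤ ∑ k ∈ Finset.range n, 2 / (δ * √δ) * (s k - s (k + 1)) * D :=
        dist_le_range_sum_of_dist_le
          (f := fun k => ⨍ υ in cylinder A (wordPrefix ω (k + 1)), f υ ∂μ) n fun hk => hstep _ hk
    _ = 2 / (δ * √δ) * (s 0 - s n) * D := by
        rw [← Finset.sum_mul, ← Finset.mul_sum, Finset.sum_range_sub']
    _ ≤ 2 / (δ * √δ) * 1 * D := by
        gcongr
        exact (sub_le_self _ (Real.sqrt_nonneg _)).trans (Real.sqrt_le_one.2 measureReal_le_one)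
    _ = 2 / (δ * √δ) * D := by rw [mul_one]

theorem norm_sub_integral_le_mul_lpNorm_Dop [IsProbabilityMeasure μ] (hδ : 0 < δ)
    (hμ : IsDoubling A μ δ) (hf : f ∈ H0 A) (ω : SigmaA l A) :
    ‖f ω - ∫ υ, f υ ∂μ‖ ≤
      (2 / (δ * √δ) + ∑ b, (μ.real (cylinder A [b]))⁻¹) * lpNorm (Dop A μ θinv u f) 2 μ := by
  obtain ⟨N, hN⟩ := exists_mem_cylinderFunctions hf
  have hω : ⨍ υ in cylinder A (wordPrefix ω (N + 1)), f υ ∂μ = f ω :=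
    setAverage_wordPrefix (cylinderFunctions_mono N.le_succ hN) ω
      (H.pos _ (admissible_wordPrefix ω N.succ_pos))
  calc ‖f ω - ∫ υ, f υ ∂μ‖
      ≤ ‖f ω - ⨍ υ in cylinder A [ω.1 0], f υ ∂μ‖ +
          ‖⨍ υ in cylinder A [ω.1 0], f υ ∂μ - ∫ υ, f υ ∂μ‖ := norm_sub_le_norm_sub_add_norm_sub ..
    _ ≤ 2 / (δ * √δ) * lpNorm (Dop A μ θinv u f) 2 μ +
          (μ.real (cylinder A [ω.1 0]))⁻¹ * lpNorm (Dop A μ θinv u f) 2 μ :=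
        add_le_add (hω ▸ H.norm_setAverage_wordPrefix_sub_le hδ hμ hN ω N)
          (H.norm_setAverage_singleton_sub_integral_le hN _)
    _ ≤ _ := by
        rw [← add_mul]
        refine mul_le_mul_of_nonneg_right (add_le_add_right ?_ _) lpNorm_nonneg
        exact Finset.single_le_sum (f := fun b => (μ.real (cylinder A [b]))⁻¹)
          (fun b _ => inv_nonneg.2 measureReal_nonneg) (Finset.mem_univ (ω.1 0))

lemma lpNorm_Dop_le_one [IsProbabilityMeasure μ] {a : SigmaA l A → ℂ} (ha : a ∈ H0 A)
    (hcomm : ∀ h ∈ H0 A,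
      eLpNorm (fun ω => Dop A μ θinv u (fun ω' => a ω' * h ω') ω - a ω * Dop A μ θinv u h ω) 2 μ
        ≤ eLpNorm h 2 μ) :
    lpNorm (Dop A μ θinv u a) 2 μ ≤ 1 := by
  obtain ⟨N, hN⟩ := exists_mem_cylinderFunctions ha
  have h := hcomm 1 one_mem_H0
  simp only [H.Dop_one, Pi.one_apply, Pi.zero_apply, mul_one, mul_zero, sub_zero] at h
  have hone : eLpNorm (fun _ : SigmaA l A => (1 : ℂ)) 2 μ = 1 := by
    simp [eLpNorm_const', measure_univ]
  rw [← toReal_eLpNorm (H.memLp_Dop hN).1]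
  exact ENNReal.toReal_le_of_le_ofReal zero_le_one (ENNReal.ofReal_one ▸ hone ▸ h)

end IsHaarFamily

end Oscillation

theorem lipschitz_ball_bounded_general {A : Matrix (Fin l) (Fin l) ℕ} {μ : Measure (SigmaA l A)}
    [IsProbabilityMeasure μ] {θinv : List (Fin l) → ℕ → Fin l} {u : List (Fin l) → ℕ → ℕ → ℝ}
    {δ : ℝ} (H : IsHaarFamily A μ θinv u) (hδ : 0 < δ) (hμ : IsDoubling A μ δ) :
    ∃ K : ℝ, 0 < K ∧ ∀ a ∈ H0 A,
      (∀ h ∈ H0 A,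
      eLpNorm (fun ω => Dop A μ θinv u (fun ω' => a ω' * h ω') ω - a ω * Dop A μ θinv u h ω) 2 μ
        ≤ eLpNorm h 2 μ) →
      ∀ ω : SigmaA l A, ‖a ω - ∫ ω', a ω' ∂μ‖ ≤ K := by
  have hK : 0 < 2 / (δ * √δ) + ∑ b, (μ.real (cylinder A [b]))⁻¹ :=
    add_pos_of_pos_of_nonneg (by positivity)
      (Finset.sum_nonneg fun b _ => inv_nonneg.2 measureReal_nonneg)
  exact ⟨_, hK, fun a ha hcomm ω => (H.norm_sub_integral_le_mul_lpNorm_Dop hδ hμ ha ω).trans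
    (mul_le_of_le_one_right hK.le (H.lpNorm_Dop_le_one ha hcomm))⟩

/-- There is a constant `K > 0` such that every `a ∈ H₀` with
`‖[D, π(a)]‖ ≤ 1` on `H₀` satisfies `‖a − (∫ a dμ)·1‖_∞ ≤ K`. -/
theorem lipschitz_ball_bounded
    (hl : 2 ≤ l) (A : Matrix (Fin l) (Fin l) ℕ) (hA : Primitive A)
    (φ : SigmaA l A → ℝ) (hφ : HolderCont φ) (P : ℝ)
    (μ : Measure (SigmaA l A)) [IsProbabilityMeasure μ] (hGibbs : IsGibbs φ P μ)
    (θinv : List (Fin l) → ℕ → Fin l)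
    (hθ : ∀ (x : List (Fin l)) (hx : Admissible A x),
      Set.BijOn (θinv x) (Set.Iio (alpha A x)) {y : Fin l | A (x.getLast hx.1) y = 1})
    (u : List (Fin l) → ℕ → ℕ → ℝ)
    (hu_orth : ∀ x, Admissible A x → ∀ j < alpha A x, ∀ j' < alpha A x,
      ∑ m ∈ Finset.range (alpha A x), u x m j * u x m j' = if j = j' then 1 else 0)
    (hu_last : ∀ x, Admissible A x → ∀ m < alpha A x,
      u x m (alpha A x - 1) =
        (Real.sqrt ((μ (cylinder A x)).toReal))⁻¹ *
          Real.sqrt ((μ (cylinder A (child θinv x m))).toReal)) :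
    ∃ K : ℝ, 0 < K ∧ ∀ a ∈ H0 A,
      (∀ h ∈ H0 A,
      eLpNorm (fun ω => Dop A μ θinv u (fun ω' => a ω' * h ω') ω - a ω * Dop A μ θinv u h ω) 2 μ
        ≤ eLpNorm h 2 μ) →
      ∀ ω : SigmaA l A, ‖a ω - ∫ ω', a ω' ∂μ‖ ≤ K := by
  obtain ⟨δ, hδ, hμ⟩ := hGibbs.exists_isDoubling hA
  exact lipschitz_ball_bounded_general
    ⟨fun _ hx => hGibbs.measureReal_cylinder_pos hA hx, hθ, hu_orth, hu_last⟩ hδ hμ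

end SFT
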